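/- Let f, g ∈ ℤ[x] be non-zero polynomials of degrees n ≥ 1 and m ≥ 1, let d ∈ ℤ[x] be a non-zero common divisor of f and g, and suppose R = res(f/d, g/d) ≠ 0. If k is the number of pairwise distinct prime divisors of |R|, then the product of the first k prime numbers is at most A_{f,g} = 2^(2nm−n−m) · √((n+1)^m · (m+1)^n) · ‖f‖^m · ‖g‖^n. -/

import Mathlib

open Polynomial

/-- The norm `‖f‖ = √(a₀² + ⋯ + aₙ²)` of an integer polynomial. -/
noncomputable def polyNorm (f : Polynomial ℤ) : ℝ :=
  Real.sqrt (∑ i ∈ Finset.range (f.natDegree + 1), ((f.coeff i : ℝ)) ^ 2)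

/-- The `k`-th primorial: the product of the first `k` prime numbers. -/
noncomputable def kthPrimorial (k : ℕ) : ℕ := ∏ i ∈ Finset.range k, Nat.nth Nat.Prime i

/-- The Sylvester matrix of `f` and `g`: an `(m+n) × (m+n)` matrix (`n = deg f`,
`m = deg g`) whose first `m` rows contain the shifted coefficients of `f` (in
descending order) and whose last `n` rows contain the shifted coefficients of `g`. -/
def sylvester {R : Type*} [CommRing R] (f g : Polynomial R) :
    Matrix (Fin (g.natDegree + f.natDegree)) (Fin (g.natDegree + f.natDegree)) R :=
  Matrix.of fun i j =>
    if (i : ℕ) < g.natDegree then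
      (if (i : ℕ) ≤ (j : ℕ) ∧ (j : ℕ) ≤ (i : ℕ) + f.natDegree then
        f.coeff (f.natDegree - ((j : ℕ) - (i : ℕ))) else 0)
    else
      (if (i : ℕ) - g.natDegree ≤ (j : ℕ) ∧ (j : ℕ) ≤ (i : ℕ) then
        g.coeff (g.natDegree - ((j : ℕ) - ((i : ℕ) - g.natDegree))) else 0)

/-- The resultant of two polynomials: the determinant of their Sylvester matrix. -/
def resultant {R : Type*} [CommRing R] (f g : Polynomial R) : R :=
  (_root_.sylvester f g).det

lemma aux_resultant_eq (f g : Polynomial ℤ) :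
    _root_.resultant f g = Polynomial.resultant f g := by
  let e : Fin (g.natDegree + f.natDegree) ≃ Fin (f.natDegree + g.natDegree) :=
    Fin.revPerm.trans (finCongr (add_comm _ _))
  have h : _root_.sylvester f g =
      ((Polynomial.sylvester f g f.natDegree g.natDegree).transpose).submatrix e e := by
    ext i j
    have hi : ((e i : Fin _) : ℕ) = g.natDegree + f.natDegree - (i + 1) := by simp [e]
    have hj : ((e j : Fin _) : ℕ) = g.natDegree + f.natDegree - (j + 1) := by simp [e]
    have hi' := i.2
    have hj' := j.2
    rw [Matrix.submatrix_apply, Matrix.transpose_apply]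
    generalize e i = a at *
    generalize e j = b at *
    unfold _root_.sylvester Polynomial.sylvester
    simp only [Matrix.of_apply]
    induction a using Fin.addCases with
    | left a =>
      have := a.2
      simp only [Fin.val_castAdd] at hi
      simp only [Fin.addCases_left, Set.mem_Icc]
      rw [if_neg (by omega)]
      split_ifs
      · congr 1; omega
      · omega
      · omega
      · rfl
    | right a =>
      have := a.2
      simp only [Fin.val_natAdd] at hi
      simp only [Fin.addCases_right, Set.mem_Icc]
      rw [if_pos (by omega)]
      split_ifs
      · congr 1; omega
      · omega
      · omega
      · rfl
  unfold _root_.resultant Polynomial.resultant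
  rw [h, Matrix.det_submatrix_equiv_self, Matrix.det_transpose]

lemma aux_norm_prod (s : Multiset ℂ) (φ : ℂ → ℂ) :
    ‖(s.map φ).prod‖ = (s.map fun a => ‖φ a‖).prod := by
  induction s using Multiset.induction with
  | empty => simp
  | cons a s ih => simp [ih]

lemma aux_prod_le (s : Multiset ℂ) (φ ψ : ℂ → ℝ) (c : ℝ) (k : ℕ) (hc : 0 ≤ c)
    (h0 : ∀ a, 0 ≤ φ a) (hψ : ∀ a, 0 ≤ ψ a)
    (h : ∀ a, φ a ≤ c * ψ a ^ k) :
    (s.map φ).prod ≤ c ^ s.card * (s.map ψ).prod ^ k := by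
  induction s using Multiset.induction with
  | empty => simp
  | cons a s ih =>
    simp only [Multiset.map_cons, Multiset.prod_cons, Multiset.card_cons]
    have h1 : 0 ≤ (s.map φ).prod := Multiset.prod_nonneg (by
      intro x hx; obtain ⟨y, -, rfl⟩ := Multiset.mem_map.1 hx; exact h0 y)
    calc _ ≤ (c * ψ a ^ k) * (c ^ s.card * (s.map ψ).prod ^ k) :=
          mul_le_mul (h a) ih h1 (mul_nonneg hc (pow_nonneg (hψ a) _))
      _ = _ := by ring

lemma aux_eval_le (g : Polynomial ℂ) (a : ℂ) :
    ‖g.eval a‖ ≤ (2 ^ g.natDegree * g.mahlerMeasure) * (max 1 ‖a‖) ^ g.natDegree := by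
  have hs := IsAlgClosed.splits g
  have h1 : g.eval a = g.leadingCoeff * (g.roots.map fun b => a - b).prod := by
    conv_lhs => rw [hs.eq_prod_roots]
    simp [eval_multiset_prod, Multiset.map_map, Function.comp_def]
  rw [h1, norm_mul, aux_norm_prod, mahlerMeasure_eq_leadingCoeff_mul_prod_roots]
  have h2 := aux_prod_le g.roots (fun b => ‖a - b‖) (fun b => max 1 ‖b‖) (2 * max 1 ‖a‖) 1
    (by positivity) (fun _ => norm_nonneg _) (fun _ => by positivity) (by
      intro b
      have := norm_sub_le a b
      have h3 : 1 ≤ max 1 ‖a‖ := le_max_left _ _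
      have h4 : 1 ≤ max 1 ‖b‖ := le_max_left _ _
      have h5 : ‖a‖ ≤ max 1 ‖a‖ := le_max_right _ _
      have h6 : ‖b‖ ≤ max 1 ‖b‖ := le_max_right _ _
      simp only [pow_one]
      nlinarith)
  rw [← hs.natDegree_eq_card_roots] at h2
  calc _ ≤ _ := mul_le_mul_of_nonneg_left h2 (norm_nonneg _)
    _ = _ := by ring

lemma aux_res_le (f g : Polynomial ℂ) :
    ‖Polynomial.resultant f g‖ ≤
      2 ^ (f.natDegree * g.natDegree) * f.mahlerMeasure ^ g.natDegree *
        g.mahlerMeasure ^ f.natDegree := by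
  have hs := IsAlgClosed.splits f
  rw [resultant_eq_prod_eval f g _ le_rfl hs, norm_mul, norm_pow, aux_norm_prod]
  have h2 := aux_prod_le f.roots (fun b => ‖g.eval b‖) (fun b => max 1 ‖b‖)
    (2 ^ g.natDegree * g.mahlerMeasure) g.natDegree
    (mul_nonneg (by positivity) (mahlerMeasure_nonneg _)) (fun _ => norm_nonneg _)
    (fun _ => by positivity) (aux_eval_le g)
  rw [← hs.natDegree_eq_card_roots] at h2
  rw [mahlerMeasure_eq_leadingCoeff_mul_prod_roots f]
  calc _ ≤ _ := mul_le_mul_of_nonneg_left h2 (by positivity)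
    _ = _ := by rw [mul_pow, mul_pow, ← pow_mul, mul_comm f.natDegree]; ring

lemma aux_mahler_le (f : Polynomial ℤ) :
    (f.map (Int.castRingHom ℂ)).mahlerMeasure ≤ polyNorm f := by
  refine (mahlerMeasure_le_sqrt_sum_sq_norm_coeff _).trans ?_
  unfold polyNorm
  apply Real.sqrt_le_sqrt
  have h : ∀ i, ‖(f.map (Int.castRingHom ℂ)).coeff i‖ ^ 2 = ((f.coeff i : ℝ)) ^ 2 := by
    intro i
    simp
  simp only [h]
  apply Finset.sum_le_sum_of_subset_of_nonneg
  · intro i hi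
    rw [Finset.mem_range, Nat.lt_succ_iff]
    exact (le_natDegree_of_mem_supp i hi).trans natDegree_map_le
  · intros; positivity

lemma aux_primorial (s : Finset ℕ) : (∀ p ∈ s, p.Prime) →
    kthPrimorial s.card ≤ ∏ p ∈ s, p := by
  induction s using Finset.induction_on_max with
  | empty => simp [kthPrimorial]
  | insert a s ha ih =>
    intro hp
    have hn : a ∉ s := fun h => lt_irrefl _ (ha a h)
    rw [Finset.card_insert_of_notMem hn, Finset.prod_insert hn, mul_comm]
    unfold kthPrimorial at *
    rw [Finset.prod_range_succ]
    refine Nat.mul_le_mul (ih fun p h => hp p (Finset.mem_insert_of_mem h)) ?_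
    have hc : s.card ≤ Nat.count Nat.Prime a := by
      rw [Nat.count_eq_card_filter_range]
      apply Finset.card_le_card
      intro p h
      simp [ha p h, hp p (Finset.mem_insert_of_mem h)]
    calc _ ≤ Nat.nth Nat.Prime (Nat.count Nat.Prime a) :=
          Nat.nth_monotone Nat.infinite_setOf_prime hc
      _ = a := Nat.nth_count (hp a (Finset.mem_insert_self _ _))

lemma aux_two_pow (n m : ℕ) (hn : 1 ≤ n) (hm : 1 ≤ m) :
    (2 : ℝ) ^ (n * m) ≤
      2 ^ (2 * n * m - n - m) * Real.sqrt (((n : ℝ) + 1) ^ m * ((m : ℝ) + 1) ^ n) := by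
  have h1 : n * m ≤ (2 * n * m - n - m) + 1 := by
    obtain ⟨a, rfl⟩ := Nat.exists_eq_add_of_le hn
    obtain ⟨b, rfl⟩ := Nat.exists_eq_add_of_le hm
    have : 2 * (1 + a) * (1 + b) = 2 + 2 * a + 2 * b + 2 * (a * b) := by ring
    have : (1 + a) * (1 + b) = 1 + a + b + (a * b) := by ring
    omega
  have h2 : (2 : ℝ) ≤ Real.sqrt (((n : ℝ) + 1) ^ m * ((m : ℝ) + 1) ^ n) := by
    apply Real.le_sqrt_of_sq_le
    have hn' : (1 : ℝ) ≤ n := by exact_mod_cast hn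
    have hm' : (1 : ℝ) ≤ m := by exact_mod_cast hm
    have h3 : (2 : ℝ) ≤ ((n : ℝ) + 1) ^ m :=
      le_trans (by linarith) (le_self_pow₀ (by linarith) (by omega))
    have h4 : (2 : ℝ) ≤ ((m : ℝ) + 1) ^ n :=
      le_trans (by linarith) (le_self_pow₀ (by linarith) (by omega))
    nlinarith
  calc (2 : ℝ) ^ (n * m) ≤ 2 ^ ((2 * n * m - n - m) + 1) :=
        pow_le_pow_right₀ (by norm_num) h1
    _ = 2 ^ (2 * n * m - n - m) * 2 := pow_succ _ _
    _ ≤ _ := mul_le_mul_of_nonneg_left h2 (by positivity)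

lemma aux_factor_le (f d f₁ : Polynomial ℤ) (hf : f ≠ 0) (h : f = d * f₁) :
    1 ≤ (f₁.map (Int.castRingHom ℂ)).mahlerMeasure ∧
    (f₁.map (Int.castRingHom ℂ)).mahlerMeasure ≤ polyNorm f ∧ f₁.natDegree ≤ f.natDegree := by
  have hd : d ≠ 0 := by rintro rfl; simp [h] at hf
  have hf₁ : f₁ ≠ 0 := by rintro rfl; simp [h] at hf
  have h1 := one_le_mahlerMeasure_of_ne_zero hf₁
  have h2 := one_le_mahlerMeasure_of_ne_zero hd
  refine ⟨h1, le_trans ?_ (aux_mahler_le f), ?_⟩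
  · rw [h, Polynomial.map_mul, mahlerMeasure_mul]
    nlinarith
  · rw [h, natDegree_mul hd hf₁]; omega

/-- For non-zero `f, g ∈ ℤ[x]` of degrees `n, m ≥ 1`, a non-zero common divisor `d` of
`f` and `g` with `R = res(f/d, g/d) ≠ 0`, if `k` is the number of pairwise distinct
prime divisors of `|R|`, then the product of the first `k` primes is at most
`A_{f,g} = 2^(2nm - n - m) · √((n+1)^m (m+1)^n) · ‖f‖^m · ‖g‖^n`. -/
theorem kthPrimorial_le_resultant_bound (f g d f₁ g₁ : Polynomial ℤ)
    (hf : f ≠ 0) (hg : g ≠ 0) (hd : d ≠ 0)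
    (hn : 1 ≤ f.natDegree) (hm : 1 ≤ g.natDegree)
    (hf₁ : f = d * f₁) (hg₁ : g = d * g₁)
    (hR : _root_.resultant f₁ g₁ ≠ 0) :
    (kthPrimorial (_root_.resultant f₁ g₁).natAbs.primeFactors.card : ℝ) ≤
      2 ^ (2 * f.natDegree * g.natDegree - f.natDegree - g.natDegree) *
        Real.sqrt ((f.natDegree + 1) ^ g.natDegree * (g.natDegree + 1) ^ f.natDegree) *
        polyNorm f ^ g.natDegree * polyNorm g ^ f.natDegree := by
  obtain ⟨a1, a2, a3⟩ := aux_factor_le f d f₁ hf hf₁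
  obtain ⟨b1, b2, b3⟩ := aux_factor_le g d g₁ hg hg₁
  have hinj : Function.Injective (Int.castRingHom ℂ) := (Int.castRingHom ℂ).injective_int
  have key := aux_res_le (f₁.map (Int.castRingHom ℂ)) (g₁.map (Int.castRingHom ℂ))
  rw [natDegree_map_eq_of_injective hinj, natDegree_map_eq_of_injective hinj,
    resultant_map_map, ← aux_resultant_eq] at key
  have hk : (kthPrimorial (_root_.resultant f₁ g₁).natAbs.primeFactors.card) ≤
      (_root_.resultant f₁ g₁).natAbs :=
    (aux_primorial _ fun p hp => Nat.prime_of_mem_primeFactors hp).trans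
      (Nat.le_of_dvd (Int.natAbs_pos.2 hR) (Nat.prod_primeFactors_dvd _))
  have hk' : (kthPrimorial (_root_.resultant f₁ g₁).natAbs.primeFactors.card : ℝ) ≤
      ‖(Int.castRingHom ℂ) (_root_.resultant f₁ g₁)‖ := by
    have e : ‖(Int.castRingHom ℂ) (_root_.resultant f₁ g₁)‖ =
        ((_root_.resultant f₁ g₁).natAbs : ℝ) := by
      simp [Nat.cast_natAbs]
    rw [e]
    exact_mod_cast hk
  have pf : 1 ≤ polyNorm f := a1.trans a2
  have pg : 1 ≤ polyNorm g := b1.trans b2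
  refine (hk'.trans key).trans ?_
  have e1 : (2 : ℝ) ^ (f₁.natDegree * g₁.natDegree) ≤ 2 ^ (f.natDegree * g.natDegree) :=
    pow_le_pow_right₀ (by norm_num) (Nat.mul_le_mul a3 b3)
  have e2 : (f₁.map (Int.castRingHom ℂ)).mahlerMeasure ^ g₁.natDegree ≤
      polyNorm f ^ g.natDegree :=
    (pow_le_pow_left₀ (by linarith) a2 _).trans (pow_le_pow_right₀ pf b3)
  have e3 : (g₁.map (Int.castRingHom ℂ)).mahlerMeasure ^ f₁.natDegree ≤
      polyNorm g ^ f.natDegree :=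
    (pow_le_pow_left₀ (by linarith) b2 _).trans (pow_le_pow_right₀ pg a3)
  have e0 := e1.trans (aux_two_pow f.natDegree g.natDegree hn hm)
  have n1 := pow_nonneg (zero_le_one.trans a1) g₁.natDegree
  have n2 := pow_nonneg (zero_le_one.trans b1) f₁.natDegree
  have n3 : 0 ≤ polyNorm f ^ g.natDegree := n1.trans e2
  exact mul_le_mul (mul_le_mul e0 e2 n1 (by positivity)) e3 n2 (by positivity)
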